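/- arXiv:1509.06501 — 4 statements merged into one kernel-verified Lean document; each statement's English description precedes it below -/
import Mathlib

section
/- Let M = (Q, Σ, E, I) be an NFA with all states final such that I is nonempty and every state of Q is reachable (for every q ∈ Q there is a word u with q ∈ M(u)), and let F be a relation flanking M. Then M is universal (every word u ∈ Σ* is accepted by M) if and only if F is the empty relation, i.e. there is no pair (q,a) ∈ Q×Σ with (q,a) ∈ F. -/
/-- A nondeterministic finite automaton (all states final). -/
structure NFA' (Q A : Type) where
  E : Q → A → Q → Prop
  I : Set Q

namespace NFA'

variable {Q A : Type}

/-- One step of the automaton on a set of states. -/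
def step (M : NFA' Q A) (S : Set Q) (a : A) : Set Q := {q' | ∃ q ∈ S, M.E q a q'}

/-- `M.reach u` is the set of states reached after reading the word `u`
(`M(ε) = I`, `M(u·a) = {q' | ∃ q ∈ M(u), (q,a,q') ∈ E}`). -/
def reach (M : NFA' Q A) (u : List A) : Set Q := u.foldl M.step M.I

/-- The (prefix-closed) language of `M`: words `u` with `M(u) ≠ ∅`. -/
def lang (M : NFA' Q A) : Set (List A) := {u | (M.reach u).Nonempty}

/-- `F` flanks `M`: for all words `u` and symbols `a`,
`u ∈ L(M) ∧ u·a ∉ L(M)` iff some state of `M(u)` forbids `a`. -/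
def Flanks (M : NFA' Q A) (F : Q → A → Prop) : Prop :=
  ∀ (u : List A) (a : A),
    (u ∈ M.lang ∧ u ++ [a] ∉ M.lang) ↔ ∃ q ∈ M.reach u, F q a

end NFA'

/-!
A flanking relation records exactly where the prefix-closed language fails to extend: reading `a`
after an accepted word `u` stays in the language iff no state of `M(u)` forbids `a`. By induction
on words, universality therefore says that the empty word is accepted and that no reachable state
forbids anything.
-/

namespace NFA'

variable {Q A : Type} {M : NFA' Q A} {F : Q → A → Prop}

theorem nil_mem_lang_iff : [] ∈ M.lang ↔ M.I.Nonempty :=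
  Iff.rfl

theorem mem_lang_of_mem_reach {u : List A} {q : Q} (hq : q ∈ M.reach u) : u ∈ M.lang :=
  ⟨q, hq⟩

theorem forall_mem_lang_iff :
    (∀ u, u ∈ M.lang) ↔ M.I.Nonempty ∧ ∀ u ∈ M.lang, ∀ a, u ++ [a] ∈ M.lang := by
  refine ⟨fun hM ↦ ⟨nil_mem_lang_iff.mp (hM []), fun u _ a ↦ hM (u ++ [a])⟩, ?_⟩
  rintro ⟨hI, hext⟩ u
  induction u using List.reverseRecOn with
  | nil => exact nil_mem_lang_iff.mpr hI
  | append_singleton u a ih => exact hext u ih a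

theorem Flanks.append_singleton_mem_lang_iff (hF : M.Flanks F) {u : List A} (hu : u ∈ M.lang)
    (a : A) : u ++ [a] ∈ M.lang ↔ ∀ q ∈ M.reach u, ¬ F q a := by
  have hleave : u ++ [a] ∉ M.lang ↔ ∃ q ∈ M.reach u, F q a :=
    (and_iff_right hu).symm.trans (hF u a)
  simpa using hleave.not

theorem Flanks.forall_mem_lang_iff (hF : M.Flanks F) :
    (∀ u, u ∈ M.lang) ↔ M.I.Nonempty ∧ ∀ u, ∀ q ∈ M.reach u, ∀ a, ¬ F q a := by
  rw [NFA'.forall_mem_lang_iff]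
  refine and_congr_right fun _ ↦ ⟨fun hext u q hq a ↦ ?_, fun hfree u hu a ↦ ?_⟩
  · have hu : u ∈ M.lang := mem_lang_of_mem_reach hq
    exact (hF.append_singleton_mem_lang_iff hu a).mp (hext u hu a) q hq
  · exact (hF.append_singleton_mem_lang_iff hu a).mpr fun q hq ↦ hfree u q hq a

end NFA'

theorem stmt0_general {Q A : Type} (M : NFA' Q A) (F : Q → A → Prop)
    (hI : M.I.Nonempty) (hreach : ∀ q : Q, ∃ u : List A, q ∈ M.reach u) (hF : M.Flanks F) :
    (∀ u : List A, u ∈ M.lang) ↔ ∀ (q : Q) (a : A), ¬ F q a := by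
  rw [hF.forall_mem_lang_iff, and_iff_right hI]
  refine ⟨fun hfree q ↦ ?_, fun hF_empty _ q _ ↦ hF_empty q⟩
  obtain ⟨u, hq⟩ := hreach q
  exact hfree u q hq

/-- for an FFA `(M, F)` with nonempty initial set and every state
reachable, `M` is universal iff `F` is the empty relation. -/
theorem stmt0 {Q A : Type} [Fintype Q] [Fintype A]
    (M : NFA' Q A) (F : Q → A → Prop)
    (hI : M.I.Nonempty)
    (hreach : ∀ q : Q, ∃ u : List A, q ∈ M.reach u)
    (hF : M.Flanks F) :
    (∀ u : List A, u ∈ M.lang) ↔ ∀ (q : Q) (a : A), ¬ F q a :=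
  stmt0_general M F hI hreach hF
end

section
/- Let M = (Q, Σ, E, I) be an NFA with all states final, and for a ∈ Σ let M⁻¹(a) = ⋃ { M(v) | v ∈ Σ*, v·a ∈ L(M) } be the set of states reachable by words that can be extended by a. Then M is flankable if and only if for every word u ∈ L(M) and every symbol a ∈ Σ with u·a ∉ L(M), the set M(u) \ M⁻¹(a) is nonempty. -/
/-!
A relation flanking `M` can never forbid `a` in a state of `M⁻¹(a)`: such a state is also reached
by some word that `a` does extend. Hence the complement of `M⁻¹(a)` is the largest candidate. It
never forbids `a` after a word that `a` extends, since all states of `M(u)` lie in `M⁻¹(a)` when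
`u·a ∈ L(M)`, so it can only fail by forbidding too little.
-/

namespace NFA'

variable {Q A : Type} {M : NFA' Q A} {F : Q → A → Prop} {u : List A} {a : A} {q : Q}

/-- The set `M⁻¹(a)` of states reached by words that can be extended by `a`. The extension
need not pass through the state: the state itself may have no `a`-transition. -/
def reachBefore (M : NFA' Q A) (a : A) : Set Q :=
  {q | ∃ v : List A, q ∈ M.reach v ∧ v ++ [a] ∈ M.lang}

/-- The relation forbidding `a` in `q` iff `q ∉ M⁻¹(a)`. It contains every relation flanking `M`
and flanks `M` as soon as `M` is flankable. -/
def maximalFlank (M : NFA' Q A) (q : Q) (a : A) : Prop := q ∉ M.reachBefore a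

theorem Flanks.le_maximalFlank (hF : M.Flanks F) : F ≤ M.maximalFlank :=
  fun q a hqa ⟨v, hqv, hva⟩ => ((hF v a).2 ⟨q, hqv, hqa⟩).2 hva

theorem Flanks.reach_diff_reachBefore_nonempty (hF : M.Flanks F) (hu : u ∈ M.lang)
    (hua : u ++ [a] ∉ M.lang) : (M.reach u \ M.reachBefore a).Nonempty :=
  let ⟨q, hqu, hqa⟩ := (hF u a).1 ⟨hu, hua⟩
  ⟨q, hqu, hF.le_maximalFlank q a hqa⟩

theorem append_notMem_lang_of_maximalFlank (hqu : q ∈ M.reach u) (hqa : M.maximalFlank q a) :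
    u ++ [a] ∉ M.lang :=
  fun hua => hqa ⟨u, hqu, hua⟩

theorem flanks_maximalFlank
    (h : ∀ (u : List A) (a : A), u ∈ M.lang → u ++ [a] ∉ M.lang →
      (M.reach u \ M.reachBefore a).Nonempty) :
    M.Flanks M.maximalFlank := fun u a =>
  ⟨fun ⟨hu, hua⟩ => h u a hu hua,
    fun ⟨q, hqu, hqa⟩ => ⟨⟨q, hqu⟩, append_notMem_lang_of_maximalFlank hqu hqa⟩⟩

end NFA'

theorem stmt3_general {Q A : Type} (M : NFA' Q A) :
    (∃ F : Q → A → Prop, M.Flanks F) ↔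
      ∀ (u : List A) (a : A), u ∈ M.lang → u ++ [a] ∉ M.lang →
        (M.reach u \ M.reachBefore a).Nonempty :=
  ⟨fun ⟨_, hF⟩ _ _ hu hua => hF.reach_diff_reachBefore_nonempty hu hua,
    fun h => ⟨M.maximalFlank, NFA'.flanks_maximalFlank h⟩⟩

/-- `M` is flankable iff for every accepted word `u` and symbol `a`
with `u·a` not accepted, the set `M(u) \ M⁻¹(a)` is nonempty, where
`M⁻¹(a) = ⋃ {M(v) | v·a ∈ L(M)}`. -/
theorem stmt3 {Q A : Type} [Fintype Q] [Fintype A] (M : NFA' Q A) :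
    (∃ F : Q → A → Prop, M.Flanks F) ↔
      ∀ (u : List A) (a : A), u ∈ M.lang → u ++ [a] ∉ M.lang →
        (M.reach u \ {q | ∃ v : List A, q ∈ M.reach v ∧ v ++ [a] ∈ M.lang}).Nonempty :=
  stmt3_general M
end

section
/- Let M1 = (Q1, Σ, E1, I1) be an NFA with all states final, let (M2, F2) be an FFA with M2 = (Q2, Σ, E2, I2), and let P be the product NFA with state set (Q1×Q2) ∪ {⊥}, initial states I1×I2, transitions (q1,q2) →a (q1',q2') whenever q1 →a q1' in M1 and q2 →a q2' in M2, and (q1,q2) →a ⊥ whenever q1 →a q1' in M1 for some q1' and (q2,a) ∈ F2. Then every word u with ⊥ ∈ P(u) is accepted by M1 and not accepted by M2. -/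
/-- Product of an NFA `M1` with an FFA `(M2, F2)`, with an extra error state `⊥`
(encoded as `none`): `(q1,q2) →a (q1',q2')` when `q1 →a q1'` and `q2 →a q2'`, and
`(q1,q2) →a ⊥` when `q1` has an outgoing `a`-transition and `(q2,a) ∈ F2`;
`⊥` has no outgoing transitions. -/
def prodBot {Q1 Q2 A : Type} (M1 : NFA' Q1 A) (M2 : NFA' Q2 A)
    (F2 : Q2 → A → Prop) : NFA' (Option (Q1 × Q2)) A where
  E s a s' :=
    (∃ q1 q2 q1' q2', s = some (q1, q2) ∧ s' = some (q1', q2') ∧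
        M1.E q1 a q1' ∧ M2.E q2 a q2') ∨
    (∃ q1 q2, s = some (q1, q2) ∧ s' = none ∧ (∃ q1', M1.E q1 a q1') ∧ F2 q2 a)
  I := {s | ∃ q1 ∈ M1.I, ∃ q2 ∈ M2.I, s = some (q1, q2)}

namespace NFA'

variable {Q A : Type} {M : NFA' Q A}

theorem reach_append_singleton (M : NFA' Q A) (u : List A) (a : A) :
    M.reach (u ++ [a]) = M.step (M.reach u) a :=
  List.foldl_concat ..

theorem mem_reach_append_singleton {u : List A} {a : A} {q' : Q} :
    q' ∈ M.reach (u ++ [a]) ↔ ∃ q ∈ M.reach u, M.E q a q' := by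
  rw [reach_append_singleton]
  rfl

theorem append_singleton_mem_lang {u : List A} {a : A} :
    u ++ [a] ∈ M.lang ↔ ∃ q ∈ M.reach u, ∃ q', M.E q a q' := by
  change (∃ q', q' ∈ M.reach (u ++ [a])) ↔ _
  simp only [mem_reach_append_singleton]
  tauto

end NFA'

namespace prodBot

variable {Q1 Q2 A : Type} {M1 : NFA' Q1 A} {M2 : NFA' Q2 A} {F2 : Q2 → A → Prop}

theorem E_some_some {q1 q1' : Q1} {q2 q2' : Q2} {a : A} :
    (prodBot M1 M2 F2).E (some (q1, q2)) a (some (q1', q2')) ↔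
      M1.E q1 a q1' ∧ M2.E q2 a q2' := by
  simp [prodBot]

theorem E_some_none {q1 : Q1} {q2 : Q2} {a : A} :
    (prodBot M1 M2 F2).E (some (q1, q2)) a none ↔ (∃ q1', M1.E q1 a q1') ∧ F2 q2 a := by
  simp [prodBot]

theorem not_E_none {a : A} {s : Option (Q1 × Q2)} : ¬(prodBot M1 M2 F2).E none a s := by
  simp [prodBot]

theorem some_mem_I {q1 : Q1} {q2 : Q2} :
    some (q1, q2) ∈ (prodBot M1 M2 F2).I ↔ q1 ∈ M1.I ∧ q2 ∈ M2.I := by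
  simp [prodBot]

theorem none_notMem_I : none ∉ (prodBot M1 M2 F2).I := by
  simp [prodBot]

theorem mem_reach_append_singleton {u : List A} {a : A} {s : Option (Q1 × Q2)} :
    s ∈ (prodBot M1 M2 F2).reach (u ++ [a]) ↔
      ∃ q1 q2, some (q1, q2) ∈ (prodBot M1 M2 F2).reach u ∧
        (prodBot M1 M2 F2).E (some (q1, q2)) a s := by
  simp only [NFA'.mem_reach_append_singleton, Option.exists, Prod.exists, not_E_none, and_false,
    false_or]

theorem some_mem_reach {u : List A} {q1 : Q1} {q2 : Q2} :
    some (q1, q2) ∈ (prodBot M1 M2 F2).reach u ↔ q1 ∈ M1.reach u ∧ q2 ∈ M2.reach u := by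
  induction u using List.reverseRecOn generalizing q1 q2 with
  | nil => exact some_mem_I
  | append_singleton u a ih =>
    rw [mem_reach_append_singleton]
    simp only [NFA'.mem_reach_append_singleton, ih, E_some_some]
    tauto

theorem none_mem_reach_append_singleton {u : List A} {a : A} :
    none ∈ (prodBot M1 M2 F2).reach (u ++ [a]) ↔
      u ++ [a] ∈ M1.lang ∧ ∃ q ∈ M2.reach u, F2 q a := by
  simp only [mem_reach_append_singleton, some_mem_reach, E_some_none,
    NFA'.append_singleton_mem_lang]
  tauto

end prodBot

theorem stmt6_general {Q1 Q2 A : Type} (M1 : NFA' Q1 A) (M2 : NFA' Q2 A) (F2 : Q2 → A → Prop)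
    (hF2 : ∀ u a, (∃ q ∈ M2.reach u, F2 q a) → u ++ [a] ∉ M2.lang) (u : List A)
    (hu : none ∈ (prodBot M1 M2 F2).reach u) : u ∈ M1.lang ∧ u ∉ M2.lang := by
  rcases List.eq_nil_or_concat' u with rfl | ⟨v, a, rfl⟩
  · exact absurd hu prodBot.none_notMem_I
  · obtain ⟨h_accepted, h_flanked⟩ := prodBot.none_mem_reach_append_singleton.mp hu
    exact ⟨h_accepted, hF2 v a h_flanked⟩

/-- every word reaching the error state `⊥` in the product automaton
is accepted by `M1` and not accepted by `M2`. -/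
theorem stmt6 {Q1 Q2 A : Type} [Fintype Q1] [Fintype Q2] [Fintype A]
    (M1 : NFA' Q1 A) (M2 : NFA' Q2 A) (F2 : Q2 → A → Prop)
    (h2 : M2.Flanks F2) :
    ∀ u : List A, none ∈ (prodBot M1 M2 F2).reach u →
      u ∈ M1.lang ∧ u ∉ M2.lang :=
  stmt6_general M1 M2 F2 fun u a h_flanked => ((h2 u a).mpr h_flanked).2
end

section
/- Fix n ≥ 1, let Π_n = {1,…,n} and Θ_n = {♯_1,…,♯_n} be disjoint copies of an n-element alphabet, Σ = Π_n ∪ Θ_n, and let L_n = Π_n* ∪ ⋃_{i=1}^n (Π_n*·i·Π_n*·♯_i) (all words over Π_n, together with all words over Π_n containing at least one occurrence of i followed by the single symbol ♯_i). Then every complete DFA D over Σ with L(D) = L_n has at least 2^n states. -/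
/-- The language `L_n` over `Σ = Π_n ⊕ Θ_n` (where `Sum.inl i` is the plain
symbol `i` and `Sum.inr i` is `♯_i`): all words over `Π_n`, together with all
words `v · ♯_i` where `v` is a word over `Π_n` containing the symbol `i`. -/
def Ln (n : ℕ) : Set (List (Fin n ⊕ Fin n)) :=
  {u | ∀ x ∈ u, x.isLeft = true} ∪
  ⋃ i : Fin n, {w | ∃ v : List (Fin n ⊕ Fin n),
    (∀ x ∈ v, x.isLeft = true) ∧ Sum.inl i ∈ v ∧ w = v ++ [Sum.inr i]}

/-
After reading a word `v` over `Π_n`, an automaton for `L_n` must still be able to decide, for each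
`i`, whether `♯_i` may follow, i.e. whether `i` occurs in `v`. Hence words with different sets of
occurring letters have different left quotients, and by the easy half of the Myhill–Nerode theorem
they lead to different states: there is at least one state for each of the `2 ^ n` subsets of `Π_n`.
-/

open Function Sum

theorem eval_injective_of_leftQuotient_injective {ι α σ : Type*} {M : DFA α σ} {w : ι → List α}
    (hw : Injective fun k => M.accepts.leftQuotient (w k)) :
    Injective fun k => M.eval (w k) := by
  simp only [Language.leftQuotient_accepts_apply] at hw
  exact Injective.of_comp (f := M.acceptsFrom) hw

theorem forall_isLeft_iff_exists_map_inl_eq {α β : Type*} {u : List (α ⊕ β)} :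
    (∀ x ∈ u, x.isLeft = true) ↔ ∃ v : List α, v.map inl = u := by
  have := Set.ext_iff.mp (Set.range_list_map (inl : α → α ⊕ β)) u
  simpa only [isLeft_iff, Set.mem_range, Set.mem_ofPred_eq, eq_comm (a := inl _)] using this.symm

/-- The language `L_n` over an arbitrary alphabet `α` in place of `Π_n`. Words over `α` are encoded
as lists `v : List α` mapped into `α ⊕ α` by `Sum.inl`, and `Sum.inr i` is `♯_i`. -/
def markedLanguage (α : Type*) : Language (α ⊕ α) :=
  {w | (∃ v : List α, v.map inl = w) ∨
    ∃ (v : List α) (i : α), i ∈ v ∧ w = v.map inl ++ [inr i]}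

theorem Ln_eq_markedLanguage (n : ℕ) : Ln n = markedLanguage (Fin n) := by
  ext w
  refine or_congr forall_isLeft_iff_exists_map_inl_eq ?_
  simp only [forall_isLeft_iff_exists_map_inl_eq, Set.mem_iUnion, Set.mem_ofPred_eq]
  constructor
  · rintro ⟨i, _, ⟨v, rfl⟩, hi, rfl⟩
    exact ⟨v, i, (List.mem_map_of_injective inl_injective).mp hi, rfl⟩
  · rintro ⟨v, i, hi, rfl⟩
    exact ⟨i, v.map inl, ⟨v, rfl⟩, List.mem_map_of_mem hi, rfl⟩

namespace markedLanguage

variable {α : Type*}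

theorem map_inl_append_inr_mem_iff {v : List α} {i : α} :
    v.map inl ++ [inr i] ∈ markedLanguage α ↔ i ∈ v := by
  constructor
  · rintro (⟨u, hu⟩ | ⟨u, j, hj, huv⟩)
    · have : inr i ∈ u.map (inl : α → α ⊕ α) := by simp [hu]
      simp at this
    · obtain ⟨hvu, hij⟩ := List.append_inj' huv rfl
      obtain rfl : v = u := List.map_injective_iff.mpr inl_injective hvu
      obtain rfl : i = j := by simpa using hij
      exact hj
  · exact fun hi => Or.inr ⟨v, i, hi, rfl⟩

theorem leftQuotient_toList_injective :
    Injective fun S : Finset α => (markedLanguage α).leftQuotient (S.toList.map inl) := by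
  have mem_iff (S : Finset α) (i : α) :
      [inr i] ∈ (markedLanguage α).leftQuotient (S.toList.map inl) ↔ i ∈ S :=
    map_inl_append_inr_mem_iff.trans Finset.mem_toList
  intro S T hST
  ext i
  exact (mem_iff S i).symm.trans ((Language.ext_iff.mp hST [inr i]).trans (mem_iff T i))

end markedLanguage

theorem stmt13_general {α σ : Type*} (M : DFA (α ⊕ α) σ) (hM : M.accepts = markedLanguage α) :
    Injective fun S : Finset α => M.eval (S.toList.map inl) :=
  eval_injective_of_leftQuotient_injective (hM ▸ markedLanguage.leftQuotient_toList_injective)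

/-- every complete DFA accepting `L_n` has at least `2^n` states. -/
theorem stmt13 (n : ℕ) (hn : 1 ≤ n) :
    ∀ (D : Type) [Fintype D], ∀ (δ : D → (Fin n ⊕ Fin n) → D) (q0 : D) (Acc : Set D),
      {u : List (Fin n ⊕ Fin n) | List.foldl δ q0 u ∈ Acc} = Ln n →
      2 ^ n ≤ Fintype.card D := by
  intro D _ δ q0 Acc h
  simpa using Fintype.card_le_of_injective _
    (stmt13_general ⟨δ, q0, Acc⟩ (h.trans (Ln_eq_markedLanguage n)))
end
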